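/- Criticality for the (p,A)-Laplacian (case 1 < p ≤ n): let 0 ∈ Ω, Ω* := Ω \ {0}, and 1 < p ≤ n. Suppose −Δ_{p,A} is subcritical in Ω, and suppose G ∈ C¹(Ω*) is a positive weakly (p,A)-harmonic function in Ω* with G(x) → ∞ as x → 0 and G → 0 at infinity in Ω. Set W := ((p−1)/p)^p (|∇G|_A / G)^p. Then the operator −Δ_{p,A} − W admits a null-sequence in Ω*: there exist nonnegative ψ_k ∈ C_c^∞(Ω*), a nonempty open set B with compact closure in Ω*, and c > 0 such that c ≤ ∫_B ψ_k^p dx ≤ c⁻¹ for all k, and ∫_{Ω*} (|∇ψ_k|_A^p − W ψ_k^p) dx → 0 as k → ∞. -/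

import Mathlib

/-!
The null-sequence consists of functions of `G`. Put `γ = (p - 1) / p` and `L = log G`. As `G → ∞`
at `0` and `G → 0` at infinity, the shells `{a ≤ L ≤ b}` are compact in `Ω \ {0}`
(`isCompact_shell`), so `H ∘ L` is a `C¹` function with compact support in `Ω \ {0}` for every
`H ∈ C¹_c(ℝ)`. Testing the equation of `G` with it gives `∫ H'(L) |∇G|_A^p / G dx = 0`. Every
continuous compactly supported function of integral zero is such an `H'`, so there is a constant
`c` with `∫ h(L) |∇G|_A^p / G dx = c ∫ h(s) ds` for all `h ∈ C_c(ℝ)`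
(`exists_const_integral_level`); this takes the place of the coarea formula and the constancy
of the flux through level sets.

For `w = G^γ φ(L / κ)`, with `φ` a bump function equal to `1` near `0`, the energy density is
`(|γ φ + φ' / κ|^p - |γ φ|^p)(L / κ)` times `|∇G|_A^p / G` (`energy_density`). Hence the energy of
`w` is `c κ ∫ (|γ φ + φ' / κ|^p - |γ φ|^p) ds`, a difference quotient at `0` of
`ε ↦ ∫ |γ φ + ε φ'|^p ds`. The derivative there is `γ^(p-1) ∫ (|φ|^p)' ds = 0`, so the
energy tends to zero as `κ → ∞` (`tendsto_hardy_defect`). On a fixed ball `w = G^γ` once `κ` is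
large, which gives the two-sided bound on `∫_B w^p`.

Since `G` is only `C¹`, mollification (`exists_approx`) is used twice: to admit `C¹` test
functions in the weak equation, and to replace `w` by a smooth function.
-/

open MeasureTheory Set Filter Topology

noncomputable section

variable {n : ℕ}

/-- The `A`-inner product `⟨A(x)ξ, η⟩`. -/
def aInner (A : EuclideanSpace ℝ (Fin n) → Matrix (Fin n) (Fin n) ℝ)
    (x ξ η : EuclideanSpace ℝ (Fin n)) : ℝ :=
  ∑ i, ∑ j, A x i j * ξ j * η i

/-- `|ξ|_A := ⟨A(x)ξ, ξ⟩^{1/2}`. -/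
def aNorm (A : EuclideanSpace ℝ (Fin n) → Matrix (Fin n) (Fin n) ℝ)
    (x ξ : EuclideanSpace ℝ (Fin n)) : ℝ :=
  Real.sqrt (aInner A x ξ ξ)

/-- Assumptions on the matrix field `A`: symmetric, positive definite, locally Hölder
continuous, and locally uniformly elliptic on `Ω`. -/
structure IsEllipticMatrix (Ω : Set (EuclideanSpace ℝ (Fin n)))
    (A : EuclideanSpace ℝ (Fin n) → Matrix (Fin n) (Fin n) ℝ) : Prop where
  symm : ∀ x ∈ Ω, (A x).IsSymm
  posdef : ∀ x ∈ Ω, ∀ ξ : EuclideanSpace ℝ (Fin n), ξ ≠ 0 → 0 < aInner A x ξ ξ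
  locHolder : ∀ K ⊆ Ω, IsCompact K → ∃ C > (0:ℝ), ∃ α ∈ Set.Ioc (0:ℝ) 1,
      ∀ x ∈ K, ∀ y ∈ K, ∀ i j, |A x i j - A y i j| ≤ C * dist x y ^ α
  elliptic : ∀ K ⊆ Ω, IsCompact K → ∃ Θ > (0:ℝ), ∀ x ∈ K, ∀ ξ : EuclideanSpace ℝ (Fin n),
      Θ⁻¹ * ‖ξ‖ ^ 2 ≤ aInner A x ξ ξ ∧ aInner A x ξ ξ ≤ Θ * ‖ξ‖ ^ 2

/-- Test functions: `C_c^∞` functions with support in `U`. -/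
def IsTestFun (U : Set (EuclideanSpace ℝ (Fin n))) (ψ : EuclideanSpace ℝ (Fin n) → ℝ) : Prop :=
  ContDiff ℝ (⊤ : ℕ∞) ψ ∧ HasCompactSupport ψ ∧ tsupport ψ ⊆ U

/-- Weakly `(p,A)`-harmonic in `U`. -/
def IsPAHarmonic (A : EuclideanSpace ℝ (Fin n) → Matrix (Fin n) (Fin n) ℝ) (p : ℝ)
    (U : Set (EuclideanSpace ℝ (Fin n))) (G : EuclideanSpace ℝ (Fin n) → ℝ) : Prop :=
  ∀ ψ, IsTestFun U ψ →
    ∫ x in U, (aNorm A x (gradient G x)) ^ (p - 2) *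
      aInner A x (gradient G x) (gradient ψ x) = 0

/-- Weak solution of `Q_{p,A,V}(u) = g` in `U` (for positive `u`). -/
def IsWeakSolution (A : EuclideanSpace ℝ (Fin n) → Matrix (Fin n) (Fin n) ℝ) (p : ℝ)
    (V g : EuclideanSpace ℝ (Fin n) → ℝ) (U : Set (EuclideanSpace ℝ (Fin n)))
    (u : EuclideanSpace ℝ (Fin n) → ℝ) : Prop :=
  ∀ ψ, IsTestFun U ψ →
    (∫ x in U, (aNorm A x (gradient u x)) ^ (p - 2) *
        aInner A x (gradient u x) (gradient ψ x))
      + (∫ x in U, V x * u x ^ (p - 1) * ψ x)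
      = ∫ x in U, g x * ψ x

/-- Weak supersolution of `Q_{p,A,V}(u) = 0` in `U` (for positive `u`). -/
def IsWeakSupersolution (A : EuclideanSpace ℝ (Fin n) → Matrix (Fin n) (Fin n) ℝ) (p : ℝ)
    (V : EuclideanSpace ℝ (Fin n) → ℝ) (U : Set (EuclideanSpace ℝ (Fin n)))
    (u : EuclideanSpace ℝ (Fin n) → ℝ) : Prop :=
  ∀ ψ, IsTestFun U ψ → (∀ x, 0 ≤ ψ x) →
    0 ≤ (∫ x in U, (aNorm A x (gradient u x)) ^ (p - 2) *
        aInner A x (gradient u x) (gradient ψ x))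
      + (∫ x in U, V x * u x ^ (p - 1) * ψ x)

/-- `Q_{p,A,V}` is subcritical in `Ω`. -/
def IsSubcritical (A : EuclideanSpace ℝ (Fin n) → Matrix (Fin n) (Fin n) ℝ) (p : ℝ)
    (V : EuclideanSpace ℝ (Fin n) → ℝ) (Ω : Set (EuclideanSpace ℝ (Fin n))) : Prop :=
  ∃ W₀ : EuclideanSpace ℝ (Fin n) → ℝ, ContinuousOn W₀ Ω ∧ (∀ x ∈ Ω, 0 ≤ W₀ x) ∧
    (∃ x ∈ Ω, W₀ x ≠ 0) ∧
    ∀ ψ, IsTestFun Ω ψ →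
      0 ≤ ∫ x in Ω, ((aNorm A x (gradient ψ x)) ^ p + (V x - W₀ x) * |ψ x| ^ p)

/-- A null-sequence for `Q_{p,A,V}` in `U`. -/
def IsNullSequence (A : EuclideanSpace ℝ (Fin n) → Matrix (Fin n) (Fin n) ℝ) (p : ℝ)
    (V : EuclideanSpace ℝ (Fin n) → ℝ) (U : Set (EuclideanSpace ℝ (Fin n)))
    (u : ℕ → EuclideanSpace ℝ (Fin n) → ℝ) : Prop :=
  (∀ k, IsTestFun U (u k)) ∧ (∀ k x, 0 ≤ u k x) ∧
  (∃ B : Set (EuclideanSpace ℝ (Fin n)), IsOpen B ∧ B.Nonempty ∧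
      IsCompact (closure B) ∧ closure B ⊆ U ∧
      ∃ c > (0:ℝ), ∀ k, c ≤ (∫ x in B, u k x ^ p) ∧ (∫ x in B, u k x ^ p) ≤ c⁻¹) ∧
  Tendsto (fun k => ∫ x in U,
      ((aNorm A x (gradient (u k) x)) ^ p + V x * |u k x| ^ p)) atTop (𝓝 0)

/-- `V` lies in the local Morrey space `M^q_loc(p;Ω)`. -/
def InMorreyLoc (p : ℝ) (Ω : Set (EuclideanSpace ℝ (Fin n)))
    (V : EuclideanSpace ℝ (Fin n) → ℝ) : Prop :=
  if p < n then
    ∃ q : ℝ, q > (n : ℝ) / p ∧ ∀ ω : Set (EuclideanSpace ℝ (Fin n)),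
      IsOpen ω → IsCompact (closure ω) → closure ω ⊆ Ω →
      ∃ M : ℝ, ∀ y ∈ ω, ∀ r ∈ Set.Ioo (0:ℝ) (Metric.diam ω),
        r ^ ((n : ℝ) / q - n) * (∫ x in ω ∩ Metric.ball y r, |V x|) ≤ M
  else if (n : ℝ) < p then
    MeasureTheory.LocallyIntegrableOn V Ω
  else
    ∃ q : ℝ, q > (n : ℝ) ∧ ∀ ω : Set (EuclideanSpace ℝ (Fin n)),
      IsOpen ω → IsCompact (closure ω) → closure ω ⊆ Ω →
      ∃ M : ℝ, ∀ y ∈ ω, ∀ r ∈ Set.Ioo (0:ℝ) (Metric.diam ω),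
        (Real.log (Metric.diam ω / r)) ^ (q * ((n : ℝ) - 1) / n) *
          (∫ x in ω ∩ Metric.ball y r, |V x|) ≤ M

/-- `G ∈ C^{1,α}(U)`: continuously differentiable with locally `α`-Hölder gradient. -/
def IsC1Holder (α : ℝ) (U : Set (EuclideanSpace ℝ (Fin n)))
    (G : EuclideanSpace ℝ (Fin n) → ℝ) : Prop :=
  ContDiffOn ℝ 1 G U ∧ ∀ K ⊆ U, IsCompact K → ∃ C : ℝ,
    ∀ x ∈ K, ∀ y ∈ K, ‖gradient G x - gradient G y‖ ≤ C * dist x y ^ α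

/-- `G → 0` at infinity in `Ω` (where `G` is considered on `U ⊆ Ω`). -/
def TendstoZeroAtInfinityIn (Ω U : Set (EuclideanSpace ℝ (Fin n)))
    (G : EuclideanSpace ℝ (Fin n) → ℝ) : Prop :=
  ∀ ε > (0:ℝ), ∃ K ⊆ Ω, IsCompact K ∧ ∀ x ∈ U \ K, G x < ε

open scoped Classical in
/-- Flux integral `∫_S |∇G|_A^p / |∇G| dH^{n-1}`, with integrand `0` where `∇G = 0`. -/
def fluxIntegral (A : EuclideanSpace ℝ (Fin n) → Matrix (Fin n) (Fin n) ℝ) (p : ℝ)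
    (G : EuclideanSpace ℝ (Fin n) → ℝ) (S : Set (EuclideanSpace ℝ (Fin n))) : ℝ :=
  ∫ x in S, (if gradient G x = 0 then 0
    else (aNorm A x (gradient G x)) ^ p / ‖gradient G x‖) ∂(μH[(n : ℝ) - 1])

end

/-! ### Mollification -/

open scoped Convolution

section Mollification

variable {n : ℕ}

lemma norm_gradient_sub (u v : EuclideanSpace ℝ (Fin n) → ℝ) (x : EuclideanSpace ℝ (Fin n)) :
    ‖gradient v x - gradient u x‖ = ‖fderiv ℝ v x - fderiv ℝ u x‖ := by
  unfold gradient
  rw [← map_sub, LinearIsometryEquiv.norm_map]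

lemma continuous_gradient {u : EuclideanSpace ℝ (Fin n) → ℝ} (hu : ContDiff ℝ 1 u) :
    Continuous (gradient u) :=
  (InnerProductSpace.toDual ℝ (EuclideanSpace ℝ (Fin n))).symm.continuous.comp
    (hu.continuous_fderiv one_ne_zero)

lemma eq_zero_of_notMem_tsupport {u : EuclideanSpace ℝ (Fin n) → ℝ}
    {x : EuclideanSpace ℝ (Fin n)} (hx : x ∉ tsupport u) : u x = 0 ∧ gradient u x = 0 := by
  refine ⟨image_eq_zero_of_notMem_tsupport hx, ?_⟩
  unfold gradient
  have : fderiv ℝ u x = 0 := by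
    by_contra h
    exact hx (support_fderiv_subset ℝ h)
  simp [this]

/-- A `C¹` function compactly supported in `U` is approximated, uniformly together with its
gradient, by test functions supported in one fixed compact subset `K` of `U`: convolve with a
normalized bump function. -/
lemma exists_mollification {U : Set (EuclideanSpace ℝ (Fin n))} (hU : IsOpen U)
    {u : EuclideanSpace ℝ (Fin n) → ℝ} (hu : ContDiff ℝ 1 u) (hc : HasCompactSupport u)
    (hs : tsupport u ⊆ U) :
    ∃ K, IsCompact K ∧ K ⊆ U ∧ tsupport u ⊆ K ∧ ∀ ε > (0 : ℝ), ∃ v, IsTestFun U v ∧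
      tsupport v ⊆ K ∧ ((∀ x, 0 ≤ u x) → ∀ x, 0 ≤ v x) ∧ (∀ x, |v x - u x| ≤ ε) ∧
      ∀ x, ‖gradient v x - gradient u x‖ ≤ ε := by
  obtain ⟨δ, hδ, hδU⟩ := hc.isCompact.exists_cthickening_subset_open hU hs
  refine ⟨Metric.cthickening δ (tsupport u), hc.isCompact.cthickening, hδU,
    Metric.self_subset_cthickening _, fun ε hε => ?_⟩
  have hdc : Continuous (fderiv ℝ u) := hu.continuous_fderiv one_ne_zero
  have huc := hc.uniformContinuous_of_continuous hu.continuous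
  have hduc := (hc.fderiv ℝ).uniformContinuous_of_continuous hdc
  obtain ⟨r₁, hr₁, h₁⟩ := Metric.uniformContinuous_iff.1 huc ε hε
  obtain ⟨r₂, hr₂, h₂⟩ := Metric.uniformContinuous_iff.1 hduc ε hε
  let r := min δ (min r₁ r₂)
  have hr : 0 < r := lt_min hδ (lt_min hr₁ hr₂)
  let φ : ContDiffBump (0 : EuclideanSpace ℝ (Fin n)) := ⟨r / 2, r, by positivity, by linarith⟩
  let v := φ.normed volume ⋆[ContinuousLinearMap.lsmul ℝ ℝ, volume] u
  have hsupp : tsupport v ⊆ Metric.cthickening δ (tsupport u) := by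
    refine closure_minimal ?_ Metric.isClosed_cthickening
    intro x hx
    obtain ⟨y, hy, z, hz, rfl⟩ := support_convolution_subset _ hx
    rw [φ.support_normed_eq] at hy
    refine Metric.mem_cthickening_of_dist_le _ z _ _ (subset_tsupport _ hz) ?_
    have hy' : dist y 0 < r := hy
    have : dist (y + z) z = dist y 0 := by simp [dist_eq_norm]
    rw [this]
    exact hy'.le.trans (min_le_left _ _)
  refine ⟨v, ⟨?_, ?_, hsupp.trans hδU⟩, hsupp, fun h0 x => ?_, fun x => ?_, fun x => ?_⟩
  · exact (φ.hasCompactSupport_normed (μ := volume)).contDiff_convolution_left _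
      φ.contDiff_normed
      (hu.continuous.locallyIntegrable (μ := volume))
  · exact HasCompactSupport.of_support_subset_isCompact hc.isCompact.cthickening
      ((subset_tsupport _).trans hsupp)
  · exact integral_nonneg fun t => mul_nonneg (φ.nonneg_normed t) (h0 _)
  · rw [← Real.dist_eq]
    refine φ.dist_normed_convolution_le hu.continuous.aestronglyMeasurable fun y hy => ?_
    exact (h₁ (lt_of_lt_of_le hy ((min_le_right _ _).trans (min_le_left _ _)))).le
  · rw [norm_gradient_sub, ← dist_eq_norm]
    have hd := hc.hasFDerivAt_convolution_right (ContinuousLinearMap.lsmul ℝ ℝ)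
      ((φ.continuous_normed (μ := volume)).locallyIntegrable (μ := volume)) hu x
    have hd' : fderiv ℝ v x =
        (φ.normed volume ⋆[ContinuousLinearMap.lsmul ℝ ℝ, volume] (fderiv ℝ u)) x := by
      rw [hd.fderiv]
      congr 1
    rw [hd']
    refine φ.dist_normed_convolution_le hdc.aestronglyMeasurable fun y hy => ?_
    exact (h₂ (lt_of_lt_of_le hy ((min_le_right _ _).trans (min_le_right _ _)))).le

/-- Integrands `Φ(x, u(x), ∇u(x))` whose integral over `U` is continuous under convergence of `u`
and `∇u` that is uniform, with supports in a fixed compact set. `C¹` functions `v` on the whole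
space are enough for the measurability requirement. -/
structure IsAdmissible (U : Set (EuclideanSpace ℝ (Fin n)))
    (Φ : EuclideanSpace ℝ (Fin n) → ℝ → EuclideanSpace ℝ (Fin n) → ℝ) : Prop where
  meas : ∀ v, ContDiff ℝ 1 v →
    AEStronglyMeasurable (fun x => Φ x (v x) (gradient v x)) (volume.restrict U)
  cont : ∀ x ∈ U, Continuous fun q : ℝ × EuclideanSpace ℝ (Fin n) => Φ x q.1 q.2
  zero : ∀ x ∈ U, Φ x 0 0 = 0
  bdd : ∀ K ⊆ U, IsCompact K → ∀ R : ℝ, ∃ C : ℝ, ∀ x ∈ K, ∀ s ξ, |s| ≤ R → ‖ξ‖ ≤ R →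
    |Φ x s ξ| ≤ C

/-- Mollification as a sequence: the test functions `v j` converge to `u` uniformly and along
every functional with an admissible integrand (dominated convergence). -/
lemma exists_approx {U : Set (EuclideanSpace ℝ (Fin n))} (hU : IsOpen U)
    {u : EuclideanSpace ℝ (Fin n) → ℝ} (hu : ContDiff ℝ 1 u) (hc : HasCompactSupport u)
    (hs : tsupport u ⊆ U) :
    ∃ v : ℕ → EuclideanSpace ℝ (Fin n) → ℝ, (∀ j, IsTestFun U (v j)) ∧
      ((∀ x, 0 ≤ u x) → ∀ j x, 0 ≤ v j x) ∧ (∀ j x, |v j x - u x| ≤ 1 / ((j : ℝ) + 1)) ∧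
      ∀ Φ, IsAdmissible U Φ → Tendsto (fun j => ∫ x in U, Φ x (v j x) (gradient (v j) x)) atTop
        (𝓝 (∫ x in U, Φ x (u x) (gradient u x))) := by
  obtain ⟨K, hK, hKU, huK, h⟩ := exists_mollification hU hu hc hs
  have hpos : ∀ j : ℕ, 0 < 1 / ((j : ℝ) + 1) := fun j => Nat.one_div_pos_of_nat
  choose v hv hvK hv0 hvu hvg using fun j : ℕ => h _ (hpos j)
  refine ⟨v, hv, fun h0 j => hv0 j h0, hvu, fun Φ hΦ => ?_⟩
  obtain ⟨R₁, hR₁⟩ := hc.exists_bound_of_continuous hu.continuous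
  obtain ⟨R₂, hR₂⟩ := (hc.fderiv ℝ).exists_bound_of_continuous (hu.continuous_fderiv one_ne_zero)
  have hR₂' : ∀ x, ‖gradient u x‖ ≤ R₂ := fun x => by
    simpa [gradient] using hR₂ x
  obtain ⟨C, hC⟩ := hΦ.bdd K hKU hK (max R₁ R₂ + 1)
  have hle : ∀ j : ℕ, 1 / ((j : ℝ) + 1) ≤ 1 := fun j => by
    rw [div_le_one (by positivity)]; linarith [(Nat.cast_nonneg j : (0:ℝ) ≤ j)]
  refine tendsto_integral_of_dominated_convergence (K.indicator fun _ => C) ?_ ?_ ?_ ?_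
  · intro j
    exact hΦ.meas _ ((hv j).1.of_le (by exact_mod_cast le_top))
  · exact ((integrable_indicator_iff hK.measurableSet).2
      (integrableOn_const hK.measure_lt_top.ne)).restrict
  · intro j
    refine (ae_restrict_iff' hU.measurableSet).2 (ae_of_all _ fun x hxU => ?_)
    by_cases hx : x ∈ K
    · rw [indicator_of_mem hx, Real.norm_eq_abs]
      refine hC x hx _ _ ?_ ?_
      · have h1 := hR₁ x
        rw [Real.norm_eq_abs] at h1
        have h2 := abs_sub_abs_le_abs_sub (v j x) (u x)
        linarith [hvu j x, hle j, le_max_left R₁ R₂]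
      · have h2 := norm_sub_norm_le (gradient (v j) x) (gradient u x)
        linarith [hvg j x, hle j, le_max_right R₁ R₂, hR₂' x]
    · obtain ⟨e1, e2⟩ := eq_zero_of_notMem_tsupport fun hx' => hx (hvK j hx')
      rw [indicator_of_notMem hx, e1, e2, hΦ.zero x hxU, norm_zero]
  · refine (ae_restrict_iff' hU.measurableSet).2 (ae_of_all _ fun x hxU => ?_)
    have t1 : Tendsto (fun j => v j x) atTop (𝓝 (u x)) := by
      rw [tendsto_iff_dist_tendsto_zero]
      exact squeeze_zero (fun _ => dist_nonneg) (fun j => by rw [Real.dist_eq]; exact hvu j x)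
        tendsto_one_div_add_atTop_nhds_zero_nat
    have t2 : Tendsto (fun j => gradient (v j) x) atTop (𝓝 (gradient u x)) := by
      rw [tendsto_iff_dist_tendsto_zero]
      exact squeeze_zero (fun _ => dist_nonneg) (fun j => by rw [dist_eq_norm]; exact hvg j x)
        tendsto_one_div_add_atTop_nhds_zero_nat
    exact ((hΦ.cont x hxU).tendsto (u x, gradient u x)).comp (t1.prodMk_nhds t2)

end Mollification

/-! ### The quadratic form of `A` and the weak equation -/

section AForm

variable {n : ℕ} {Ω U : Set (EuclideanSpace ℝ (Fin n))}
  {A : EuclideanSpace ℝ (Fin n) → Matrix (Fin n) (Fin n) ℝ}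

lemma aInner_smul_right (x ξ η : EuclideanSpace ℝ (Fin n)) (c : ℝ) :
    aInner A x ξ (c • η) = c * aInner A x ξ η := by
  simp only [aInner, Finset.mul_sum, PiLp.smul_apply, smul_eq_mul]
  refine Finset.sum_congr rfl fun i _ => Finset.sum_congr rfl fun j _ => ?_
  ring

lemma aNorm_smul (x ξ : EuclideanSpace ℝ (Fin n)) (c : ℝ) :
    aNorm A x (c • ξ) = |c| * aNorm A x ξ := by
  have : aInner A x (c • ξ) (c • ξ) = c ^ 2 * aInner A x ξ ξ := by
    simp only [aInner, Finset.mul_sum, PiLp.smul_apply, smul_eq_mul]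
    refine Finset.sum_congr rfl fun i _ => Finset.sum_congr rfl fun j _ => ?_
    ring
  rw [aNorm, this, Real.sqrt_mul (sq_nonneg c), Real.sqrt_sq_eq_abs, aNorm]

lemma aNorm_nonneg (x ξ : EuclideanSpace ℝ (Fin n)) : 0 ≤ aNorm A x ξ := Real.sqrt_nonneg _

lemma aInner_zero (x : EuclideanSpace ℝ (Fin n)) : aInner A x 0 0 = 0 := by simp [aInner]

lemma aNorm_zero (x : EuclideanSpace ℝ (Fin n)) : aNorm A x 0 = 0 := by
  rw [aNorm, aInner_zero, Real.sqrt_zero]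

lemma IsEllipticMatrix.aInner_nonneg (hA : IsEllipticMatrix Ω A)
    {x : EuclideanSpace ℝ (Fin n)} (hx : x ∈ Ω) (ξ : EuclideanSpace ℝ (Fin n)) :
    0 ≤ aInner A x ξ ξ := by
  rcases eq_or_ne ξ 0 with rfl | h
  · rw [aInner_zero]
  · exact (hA.posdef x hx ξ h).le

/-- Also true for `|ξ|_A = 0`, where `0 ^ (p - 2)` is multiplied by `0`. -/
lemma IsEllipticMatrix.aNorm_rpow_mul_aInner (hA : IsEllipticMatrix Ω A)
    {x : EuclideanSpace ℝ (Fin n)} (hx : x ∈ Ω) (ξ : EuclideanSpace ℝ (Fin n)) {p : ℝ}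
    (hp : 1 < p) : aNorm A x ξ ^ (p - 2) * aInner A x ξ ξ = aNorm A x ξ ^ p := by
  have hsq : aInner A x ξ ξ = aNorm A x ξ ^ 2 := (Real.sq_sqrt (hA.aInner_nonneg hx ξ)).symm
  rw [hsq]
  rcases (aNorm_nonneg (A := A) x ξ).eq_or_lt with h | h
  · rw [← h, Real.zero_rpow (by linarith : p ≠ 0)]; simp
  · rw [← Real.rpow_natCast, ← Real.rpow_add h]
    norm_num

lemma IsEllipticMatrix.continuousOn_coeff (hA : IsEllipticMatrix Ω A) (hΩ : IsOpen Ω)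
    (i j : Fin n) : ContinuousOn (fun x => A x i j) Ω := by
  intro x hx
  obtain ⟨r, hr, hrΩ⟩ := Metric.nhds_basis_closedBall.mem_iff.1 (hΩ.mem_nhds hx)
  obtain ⟨C, hC, α, hα, h⟩ := hA.locHolder _ hrΩ (isCompact_closedBall x r)
  refine ContinuousAt.continuousWithinAt ?_
  rw [ContinuousAt, tendsto_iff_dist_tendsto_zero]
  have hlim : Tendsto (fun y => C * dist y x ^ α) (𝓝 x) (𝓝 0) := by
    have : Continuous fun y => C * dist y x ^ α :=
      continuous_const.mul ((continuous_id.dist continuous_const).rpow_const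
        fun _ => Or.inr hα.1.le)
    simpa [Real.zero_rpow hα.1.ne'] using this.tendsto x
  refine squeeze_zero' (Eventually.of_forall fun _ => dist_nonneg) ?_ hlim
  filter_upwards [Metric.closedBall_mem_nhds x hr] with y hy
  rw [Real.dist_eq]
  exact h y hy x (Metric.mem_closedBall_self hr.le) i j

lemma IsEllipticMatrix.continuousOn_aInner (hA : IsEllipticMatrix Ω A) (hΩ : IsOpen Ω)
    (hUΩ : U ⊆ Ω) {X Y : EuclideanSpace ℝ (Fin n) → EuclideanSpace ℝ (Fin n)}
    (hX : ContinuousOn X U) (hY : ContinuousOn Y U) :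
    ContinuousOn (fun x => aInner A x (X x) (Y x)) U := by
  unfold aInner
  refine continuousOn_finsetSum _ fun i _ => continuousOn_finsetSum _ fun j _ => ?_
  have hcoord : ∀ i, Continuous fun ξ : EuclideanSpace ℝ (Fin n) => ξ i := fun i => by fun_prop
  exact (((hA.continuousOn_coeff hΩ i j).mono hUΩ).mul ((hcoord j).comp_continuousOn hX)).mul
    ((hcoord i).comp_continuousOn hY)

lemma IsEllipticMatrix.continuousOn_aNorm (hA : IsEllipticMatrix Ω A) (hΩ : IsOpen Ω)
    (hUΩ : U ⊆ Ω) {X : EuclideanSpace ℝ (Fin n) → EuclideanSpace ℝ (Fin n)}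
    (hX : ContinuousOn X U) :
    ContinuousOn (fun x => aNorm A x (X x)) U :=
  Real.continuous_sqrt.comp_continuousOn (hA.continuousOn_aInner hΩ hUΩ hX hX)

lemma continuous_aInner_right (x ξ : EuclideanSpace ℝ (Fin n)) : Continuous (aInner A x ξ) := by
  unfold aInner
  fun_prop

lemma continuous_aNorm (x : EuclideanSpace ℝ (Fin n)) : Continuous (aNorm A x) := by
  unfold aNorm aInner
  fun_prop

lemma IsEllipticMatrix.exists_aNorm_le (hA : IsEllipticMatrix Ω A)
    {K : Set (EuclideanSpace ℝ (Fin n))} (hKΩ : K ⊆ Ω) (hK : IsCompact K) :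
    ∃ c > (0 : ℝ), ∀ x ∈ K, ∀ ξ, aNorm A x ξ ≤ c * ‖ξ‖ ∧ ‖ξ‖ ≤ c * aNorm A x ξ := by
  obtain ⟨Θ, hΘ, h⟩ := hA.elliptic K hKΩ hK
  refine ⟨Real.sqrt Θ, Real.sqrt_pos.2 hΘ, fun x hx ξ => ⟨?_, ?_⟩⟩
  · rw [aNorm, ← Real.sqrt_sq (norm_nonneg ξ), ← Real.sqrt_mul hΘ.le]
    exact Real.sqrt_le_sqrt (h x hx ξ).2
  · rw [aNorm, ← Real.sqrt_mul hΘ.le]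
    refine Real.le_sqrt_of_sq_le ?_
    have := mul_le_mul_of_nonneg_left (h x hx ξ).1 hΘ.le
    rwa [← mul_assoc, mul_inv_cancel₀ hΘ.ne', one_mul] at this

lemma IsEllipticMatrix.exists_aInner_le (hA : IsEllipticMatrix Ω A) (hΩ : IsOpen Ω)
    {K : Set (EuclideanSpace ℝ (Fin n))} (hKΩ : K ⊆ Ω) (hK : IsCompact K) :
    ∃ c, ∀ x ∈ K, ∀ ξ η, |aInner A x ξ η| ≤ c * ‖ξ‖ * ‖η‖ := by
  have : ∀ i j, ∃ c, ∀ x ∈ K, ‖A x i j‖ ≤ c := fun i j =>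
    hK.exists_bound_of_continuousOn ((hA.continuousOn_coeff hΩ i j).mono hKΩ)
  choose c hc using this
  refine ⟨∑ i, ∑ j, c i j, fun x hx ξ η => ?_⟩
  rw [aInner, Finset.sum_mul, Finset.sum_mul]
  refine (Finset.abs_sum_le_sum_abs _ _).trans (Finset.sum_le_sum fun i _ => ?_)
  rw [Finset.sum_mul, Finset.sum_mul]
  refine (Finset.abs_sum_le_sum_abs _ _).trans (Finset.sum_le_sum fun j _ => ?_)
  have h1 := hc i j x hx
  have h2 := PiLp.norm_apply_le ξ j
  have h3 := PiLp.norm_apply_le η i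
  rw [Real.norm_eq_abs] at h1 h2 h3
  rw [abs_mul, abs_mul]
  have := (abs_nonneg _).trans h1
  gcongr

/-- The energy functional with a continuous potential. -/
lemma IsEllipticMatrix.isAdmissible_energy (hA : IsEllipticMatrix Ω A) (hΩ : IsOpen Ω)
    (hU : IsOpen U) (hUΩ : U ⊆ Ω) {p : ℝ} (hp : 1 < p) {V : EuclideanSpace ℝ (Fin n) → ℝ}
    (hV : ContinuousOn V U) :
    IsAdmissible U fun x s ξ => aNorm A x ξ ^ p + V x * |s| ^ p where
  meas v hv := by
    refine ContinuousOn.aestronglyMeasurable (ContinuousOn.add ?_ (hV.mul ?_)) hU.measurableSet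
    · exact (hA.continuousOn_aNorm hΩ hUΩ (continuous_gradient hv).continuousOn).rpow_const
        fun _ _ => Or.inr (by linarith)
    · exact (hv.continuous.abs.rpow_const fun _ => Or.inr (by linarith)).continuousOn
  cont x _ := by
    have h1 := (continuous_aNorm (A := A) x)
    refine Continuous.add ((h1.comp continuous_snd).rpow_const fun _ => Or.inr (by linarith))
      (continuous_const.mul (continuous_fst.abs.rpow_const fun _ => Or.inr (by linarith)))
  zero x _ := by
    simp [aNorm_zero, Real.zero_rpow (by linarith : p ≠ 0)]
  bdd K hKU hK R := by
    obtain ⟨c, hc, h⟩ := hA.exists_aNorm_le (hKU.trans hUΩ) hK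
    obtain ⟨M, hM⟩ := hK.exists_bound_of_continuousOn (hV.mono hKU)
    refine ⟨(c * R) ^ p + M * R ^ p, fun x hx s ξ hs hξ => ?_⟩
    have h1 := aNorm_nonneg (A := A) x ξ
    have hM' := hM x hx
    rw [Real.norm_eq_abs] at hM'
    refine (abs_add_le _ _).trans ?_
    rw [abs_mul, abs_of_nonneg (Real.rpow_nonneg h1 p),
      abs_of_nonneg (Real.rpow_nonneg (abs_nonneg s) p)]
    have h2 : aNorm A x ξ ≤ c * R := ((h x hx ξ).1).trans (by gcongr)
    have h3 : 0 ≤ M := (abs_nonneg _).trans hM'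
    gcongr

/-- The weak form of the `(p,A)`-Laplacian of `G`; as `p - 2` may be negative, boundedness
comes from `|∇G|_A^{p-2} ‖∇G‖ ≲ |∇G|_A^{p-1}`. -/
lemma IsEllipticMatrix.isAdmissible_weakForm (hA : IsEllipticMatrix Ω A) (hΩ : IsOpen Ω)
    (hU : IsOpen U) (hUΩ : U ⊆ Ω) {p : ℝ} (hp : 1 < p)
    {X : EuclideanSpace ℝ (Fin n) → EuclideanSpace ℝ (Fin n)} (hX : ContinuousOn X U) :
    IsAdmissible U fun x _ ξ => aNorm A x (X x) ^ (p - 2) * aInner A x (X x) ξ where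
  meas v hv := by
    have h1 := (hA.continuousOn_aNorm hΩ hUΩ hX).aemeasurable (μ := volume) hU.measurableSet
    have h2 := (hA.continuousOn_aInner hΩ hUΩ hX (continuous_gradient hv).continuousOn).aemeasurable
      (μ := volume) hU.measurableSet
    exact ((h1.pow_const _).mul h2).aestronglyMeasurable
  cont x _ := continuous_const.mul ((continuous_aInner_right x _).comp continuous_snd)
  zero x _ := by simp [aInner]
  bdd K hKU hK R := by
    obtain ⟨c, hc, h⟩ := hA.exists_aNorm_le (hKU.trans hUΩ) hK
    obtain ⟨d, hd⟩ := hA.exists_aInner_le hΩ (hKU.trans hUΩ) hK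
    obtain ⟨M, hM⟩ := hK.exists_bound_of_continuousOn
      ((hA.continuousOn_aNorm hΩ hUΩ hX).mono hKU)
    refine ⟨|d| * c * M ^ (p - 1) * R, fun x hx s ξ _ hξ => ?_⟩
    set a := aNorm A x (X x) with ha
    have ha0 : 0 ≤ a := aNorm_nonneg x _
    have haM : a ≤ M := (le_abs_self _).trans (hM x hx)
    rw [abs_mul, abs_of_nonneg (Real.rpow_nonneg ha0 _)]
    have h1 : |aInner A x (X x) ξ| ≤ |d| * (c * a) * R := by
      refine (hd x hx _ _).trans ?_
      have := le_abs_self d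
      have := (h x hx (X x)).2
      gcongr
    have hR : 0 ≤ R := (norm_nonneg _).trans hξ
    have h2 : a ^ (p - 2) * a ≤ M ^ (p - 1) := by
      rcases ha0.eq_or_lt with h0 | h0
      · rw [← h0, mul_zero]
        exact Real.rpow_nonneg (ha0.trans haM) _
      · have : a ^ (p - 2) * a = a ^ (p - 1) := by
          rw [← Real.rpow_add_one h0.ne']; ring_nf
        rw [this]
        exact Real.rpow_le_rpow ha0 haM (by linarith)
    calc a ^ (p - 2) * |aInner A x (X x) ξ|
        ≤ a ^ (p - 2) * (|d| * (c * a) * R) := by gcongr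
      _ = |d| * c * (a ^ (p - 2) * a) * R := by ring
      _ ≤ |d| * c * M ^ (p - 1) * R := by gcongr

/-- By density, test functions in the weak equation may be merely `C¹`. -/
lemma IsPAHarmonic.integral_eq_zero_of_contDiff_one (hA : IsEllipticMatrix Ω A) (hΩ : IsOpen Ω)
    (hU : IsOpen U) (hUΩ : U ⊆ Ω) {p : ℝ} (hp : 1 < p) {G : EuclideanSpace ℝ (Fin n) → ℝ}
    (hG : ContinuousOn (gradient G) U) (hharm : IsPAHarmonic A p U G)
    {u : EuclideanSpace ℝ (Fin n) → ℝ} (hu : ContDiff ℝ 1 u) (hc : HasCompactSupport u)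
    (hs : tsupport u ⊆ U) :
    ∫ x in U, aNorm A x (gradient G x) ^ (p - 2) *
      aInner A x (gradient G x) (gradient u x) = 0 := by
  obtain ⟨v, hv, -, -, h⟩ := exists_approx hU hu hc hs
  have hlim := h _ (hA.isAdmissible_weakForm hΩ hU hUΩ hp hG)
  refine tendsto_nhds_unique hlim ?_
  simp only [hharm _ (hv _)]
  exact tendsto_const_nhds

end AForm

/-! ### Functions of a level function -/

section LevelFunctions

variable {n : ℕ} {U : Set (EuclideanSpace ℝ (Fin n))}

lemma exists_support_subset_Ioo {h : ℝ → ℝ} (hc : HasCompactSupport h) :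
    ∃ b > (0 : ℝ), ∀ s, s ∉ Ioo (-b) b → h s = 0 := by
  obtain ⟨b, hb⟩ := hc.isCompact.isBounded.subset_ball (0 : ℝ)
  refine ⟨max b 1, by positivity, fun s hs => ?_⟩
  by_contra h0
  have h1 : s ∈ Metric.ball (0 : ℝ) b := hb (subset_tsupport _ h0)
  rw [Real.ball_eq_Ioo] at h1
  refine hs ⟨?_, ?_⟩
  · linarith [h1.1, le_max_left b 1]
  · linarith [h1.2, le_max_left b 1]

lemma gradient_eq_smul_of_hasDerivAt {L : EuclideanSpace ℝ (Fin n) → ℝ} {f : ℝ → ℝ} {d : ℝ}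
    {x : EuclideanSpace ℝ (Fin n)} (hf : HasDerivAt f d (L x)) (hL : DifferentiableAt ℝ L x) :
    gradient (fun y => f (L y)) x = d • gradient L x := by
  have h : HasFDerivAt (fun y => f (L y)) (d • fderiv ℝ L x) x :=
    hf.comp_hasFDerivAt x hL.hasFDerivAt
  rw [gradient, h.fderiv, gradient]
  simp

lemma gradient_indicator {L : EuclideanSpace ℝ (Fin n) → ℝ} (hU : IsOpen U)
    (hL : ContDiffOn ℝ 1 L U) {f : ℝ → ℝ} (hf : ContDiff ℝ 1 f)
    {x : EuclideanSpace ℝ (Fin n)} (hx : x ∈ U) :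
    gradient (U.indicator fun y => f (L y)) x = deriv f (L x) • gradient L x := by
  have he : (U.indicator fun y => f (L y)) =ᶠ[𝓝 x] fun y => f (L y) := by
    filter_upwards [hU.mem_nhds hx] with y hy
    rw [indicator_of_mem hy]
  rw [← gradient_eq_smul_of_hasDerivAt (hf.differentiable one_ne_zero _).hasDerivAt
    ((hL.contDiffAt (hU.mem_nhds hx)).differentiableAt one_ne_zero), gradient, gradient,
    he.fderiv_eq]

/-- If the shells `{a ≤ L ≤ b}` are compact in `U`, then `f ∘ L`, extended by zero outside `U`,
is `C¹` with compact support in `U` for every `f ∈ C¹_c(ℝ)`. -/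
lemma contDiff_indicator_level {L : EuclideanSpace ℝ (Fin n) → ℝ} (hU : IsOpen U)
    (hL : ContDiffOn ℝ 1 L U) (hcomp : ∀ a b, IsCompact {x ∈ U | L x ∈ Icc a b})
    {f : ℝ → ℝ} (hf : ContDiff ℝ 1 f) (hc : HasCompactSupport f) :
    ContDiff ℝ 1 (U.indicator fun y => f (L y)) ∧
      HasCompactSupport (U.indicator fun y => f (L y)) ∧
      tsupport (U.indicator fun y => f (L y)) ⊆ U := by
  obtain ⟨b, -, hb⟩ := exists_support_subset_Ioo hc
  have hS := hcomp (-b) b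
  set S := {x ∈ U | L x ∈ Icc (-b) b} with hSdef
  have hz : ∀ x, x ∉ S → U.indicator (fun y => f (L y)) x = 0 := by
    intro x hx
    by_cases hxU : x ∈ U
    · rw [indicator_of_mem hxU]
      exact hb _ fun h => hx ⟨hxU, Ioo_subset_Icc_self h⟩
    · exact indicator_of_notMem hxU _
  have hsub : Function.support (U.indicator fun y => f (L y)) ⊆ S := by
    intro x hx
    by_contra h
    exact hx (hz x h)
  refine ⟨contDiff_iff_contDiffAt.2 fun x => ?_, HasCompactSupport.of_support_subset_isCompact hS hsub,
    (closure_minimal hsub hS.isClosed).trans fun x hx => hx.1⟩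
  by_cases hx : x ∈ U
  · refine ((hf.contDiffAt (x := L x)).comp x (hL.contDiffAt (hU.mem_nhds hx))).congr_of_eventuallyEq ?_
    filter_upwards [hU.mem_nhds hx] with y hy
    rw [indicator_of_mem hy]; rfl
  · refine (contDiffAt_const (c := (0 : ℝ))).congr_of_eventuallyEq ?_
    filter_upwards [hS.isClosed.isOpen_compl.mem_nhds fun h : x ∈ S => hx h.1] with y hy
    exact hz y hy

lemma integrableOn_level {L M : EuclideanSpace ℝ (Fin n) → ℝ} (hU : IsOpen U)
    (hL : ContinuousOn L U) (hcomp : ∀ a b, IsCompact {x ∈ U | L x ∈ Icc a b})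
    (hM : ContinuousOn M U) {h : ℝ → ℝ} (hh : Continuous h) (hc : HasCompactSupport h) :
    IntegrableOn (fun x => h (L x) * M x) U := by
  obtain ⟨b, -, hb⟩ := exists_support_subset_Ioo hc
  have hS := hcomp (-b) b
  have hcont : ContinuousOn (fun x => h (L x) * M x) U := (hh.comp_continuousOn hL).mul hM
  refine IntegrableOn.of_forall_sdiff_eq_zero
    ((hcont.mono fun x hx => hx.1).integrableOn_compact hS) hU.measurableSet fun x hx => ?_
  rw [hb _ fun h => hx.2 ⟨hx.1, Ioo_subset_Icc_self h⟩, zero_mul]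

/-- A continuous function with compact support and vanishing integral has a compactly
supported primitive. -/
lemma exists_primitive {h : ℝ → ℝ} (hh : Continuous h) (hc : HasCompactSupport h)
    (hint : ∫ s, h s = 0) :
    ∃ H : ℝ → ℝ, ContDiff ℝ 1 H ∧ HasCompactSupport H ∧ deriv H = h := by
  obtain ⟨b, hb0, hb⟩ := exists_support_subset_Ioo hc
  have hd : ∀ t, HasDerivAt (fun t => ∫ s in (-b)..t, h s) (h t) t := fun t =>
    intervalIntegral.integral_hasDerivAt_right (hh.intervalIntegrable _ _)
      (hh.stronglyMeasurableAtFilter _ _) hh.continuousAt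
  have hder : deriv (fun t => ∫ s in (-b)..t, h s) = h := funext fun t => (hd t).deriv
  refine ⟨fun t => ∫ s in (-b)..t, h s, ?_, ?_, hder⟩
  · rw [contDiff_one_iff_deriv, hder]
    exact ⟨fun t => (hd t).differentiableAt, hh⟩
  · refine HasCompactSupport.intro (isCompact_Icc (a := -b) (b := b)) fun t ht => ?_
    rw [mem_Icc, not_and_or, not_le, not_le] at ht
    rcases ht with ht | ht
    · have : ∀ s ∈ uIcc (-b) t, h s = 0 := by
        intro s hs
        rw [uIcc_of_ge ht.le] at hs
        exact hb s fun h => by linarith [h.1, hs.2]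
      rw [intervalIntegral.integral_congr this]; simp
    · rw [intervalIntegral.integral_eq_integral_of_support_subset, hint]
      intro s hs
      have : s ∈ Ioo (-b) b := by
        by_contra h; exact hs (hb s h)
      exact ⟨this.1, (this.2.trans ht).le⟩

/-- If `∫ H'(L) M = 0` for all `H ∈ C¹_c(ℝ)`, then the image of the measure `M dx` under `L` is a
constant multiple of Lebesgue measure. -/
lemma exists_const_integral_level {L M : EuclideanSpace ℝ (Fin n) → ℝ} (hU : IsOpen U)
    (hL : ContinuousOn L U) (hcomp : ∀ a b, IsCompact {x ∈ U | L x ∈ Icc a b})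
    (hM : ContinuousOn M U)
    (hzero : ∀ H : ℝ → ℝ, ContDiff ℝ 1 H → HasCompactSupport H →
      ∫ x in U, deriv H (L x) * M x = 0) :
    ∃ c : ℝ, ∀ h : ℝ → ℝ, Continuous h → HasCompactSupport h →
      ∫ x in U, h (L x) * M x = c * ∫ s, h s := by
  let φ : ContDiffBump (0 : ℝ) := ⟨1, 2, one_pos, one_lt_two⟩
  let h₀ : ℝ → ℝ := φ.normed volume
  have hh₀ : Continuous h₀ := φ.continuous_normed
  have hc₀ : HasCompactSupport h₀ := φ.hasCompactSupport_normed
  have hi₀ : ∫ s, h₀ s = 1 := φ.integral_normed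
  refine ⟨∫ x in U, h₀ (L x) * M x, fun h hh hc => ?_⟩
  set I := ∫ s, h s with hI
  have hkc : HasCompactSupport (fun s => h s - I * h₀ s) := hc.sub hc₀.mul_left
  have hk : Continuous (fun s => h s - I * h₀ s) := hh.sub (continuous_const.mul hh₀)
  have hki : ∫ s, (h s - I * h₀ s) = 0 := by
    rw [integral_sub (hh.integrable_of_hasCompactSupport hc)
      ((hh₀.integrable_of_hasCompactSupport hc₀).const_mul I), integral_const_mul, hi₀, hI]
    ring
  obtain ⟨H, hH, hHc, hHd⟩ := exists_primitive hk hkc hki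
  have hz := hzero H hH hHc
  have e : ∀ x, deriv H (L x) * M x = h (L x) * M x - I * (h₀ (L x) * M x) := fun x => by
    rw [hHd]; ring
  simp only [e] at hz
  rw [integral_sub (integrableOn_level hU hL hcomp hM hh hc)
    ((integrableOn_level hU hL hcomp hM hh₀ hc₀).const_mul I), integral_const_mul] at hz
  linarith

end LevelFunctions

/-! ### The one-dimensional Hardy functional -/

section OneDimensional

/-- The one-dimensional Hardy defect of `e^{γs} g(s/κ)` tends to zero as `κ → ∞`: it is the
difference quotient at `0` of `ε ↦ ∫ |γ g + ε g'|^p`, whose derivative is the integral of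
`γ^{p-1} (|g|^p)'`. -/
lemma tendsto_hardy_defect {p γ : ℝ} (hp : 1 < p) (hγ : 0 < γ) {g : ℝ → ℝ}
    (hg : ContDiff ℝ 1 g) (hc : HasCompactSupport g) :
    Tendsto (fun κ : ℝ => ∫ s, (|γ * g (s / κ) + deriv g (s / κ) / κ| ^ p - |γ * g (s / κ)| ^ p))
      atTop (𝓝 0) := by
  have hp0 : 0 < p := by linarith
  have hgc := hg.continuous
  have hg'c : Continuous (deriv g) := hg.continuous_deriv le_rfl
  have hc' : HasCompactSupport (deriv g) := hc.deriv
  obtain ⟨R₁, hR₁⟩ := hc.exists_bound_of_continuous hgc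
  obtain ⟨R₂, hR₂⟩ := hc'.exists_bound_of_continuous hg'c
  have hR₁0 : 0 ≤ R₁ := (norm_nonneg _).trans (hR₁ 0)
  have hR₂0 : 0 ≤ R₂ := (norm_nonneg _).trans (hR₂ 0)
  let F : ℝ → ℝ → ℝ := fun ε s => |γ * g s + ε * deriv g s| ^ p
  let F' : ℝ → ℝ → ℝ := fun ε s =>
    p * |γ * g s + ε * deriv g s| ^ (p - 2) * (γ * g s + ε * deriv g s) * deriv g s
  have hFc : ∀ ε, Continuous (F ε) := fun ε =>
    ((continuous_const.mul hgc).add (continuous_const.mul hg'c)).abs.rpow_const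
      fun _ => Or.inr hp0.le
  have hFs : ∀ ε, HasCompactSupport (F ε) := fun ε => by
    refine HasCompactSupport.intro hc.isCompact fun s hs => ?_
    have h1 : g s = 0 := image_eq_zero_of_notMem_tsupport hs
    have h2 : deriv g s = 0 := by
      by_contra h; exact hs (support_deriv_subset h)
    simp [F, h1, h2, Real.zero_rpow hp0.ne']
  have hFi : ∀ ε, Integrable (F ε) := fun ε => (hFc ε).integrable_of_hasCompactSupport (hFs ε)
  have hpow : ∀ y B : ℝ, |y| ≤ B → |y| ^ (p - 2) * |y| ≤ B ^ (p - 1) := by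
    intro y B hy
    rcases (abs_nonneg y).eq_or_lt with h0 | h0
    · rw [← h0, mul_zero]
      exact Real.rpow_nonneg ((abs_nonneg y).trans hy) _
    · rw [← Real.rpow_add_one h0.ne', show p - 2 + 1 = p - 1 by ring]
      exact Real.rpow_le_rpow h0.le hy (by linarith)
  have key := hasDerivAt_integral_of_dominated_loc_of_deriv_le (μ := (volume : Measure ℝ))
    (F := F) (F' := F') (x₀ := (0 : ℝ)) (s := Metric.ball 0 1)
    (bound := fun s => p * (γ * R₁ + R₂) ^ (p - 1) * |deriv g s|)
    (Metric.ball_mem_nhds _ one_pos)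
    (Eventually.of_forall fun ε => (hFc ε).aestronglyMeasurable) (hFi 0)
    (by
      refine Measurable.aestronglyMeasurable ?_
      have := hgc.measurable
      have := hg'c.measurable
      fun_prop)
    (by
      refine ae_of_all _ fun s ε hε => ?_
      have hε' : |ε| ≤ 1 := by
        have := mem_ball_zero_iff.1 hε
        rw [Real.norm_eq_abs] at this
        exact this.le
      have h1 := hR₁ s
      have h2 := hR₂ s
      rw [Real.norm_eq_abs] at h1 h2
      have hy : |γ * g s + ε * deriv g s| ≤ γ * R₁ + R₂ := by
        refine (abs_add_le _ _).trans ?_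
        rw [abs_mul, abs_mul, abs_of_pos hγ]
        have : |ε| * |deriv g s| ≤ 1 * R₂ := by gcongr
        have : γ * |g s| ≤ γ * R₁ := by gcongr
        linarith
      have h3 := hpow _ _ hy
      simp only [F', Real.norm_eq_abs]
      rw [abs_mul, abs_mul, abs_mul, abs_of_pos hp0,
        abs_of_nonneg (Real.rpow_nonneg (abs_nonneg (γ * g s + ε * deriv g s)) (p - 2)),
        mul_assoc p]
      gcongr)
    ((hg'c.abs.integrable_of_hasCompactSupport hc'.norm).const_mul _)
    (by
      refine ae_of_all _ fun s ε _ => ?_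
      have hin : HasDerivAt (fun ε => γ * g s + ε * deriv g s) (deriv g s) ε := by
        simpa using ((hasDerivAt_id ε).mul_const (deriv g s)).const_add (γ * g s)
      exact (hasDerivAt_abs_rpow _ hp).comp ε hin)
  have hzero : ∫ s, F' 0 s = 0 := by
    have hd : ∀ s, HasDerivAt (fun s => γ⁻¹ * |γ * g s| ^ p) (F' 0 s) s := fun s => by
      have hin : HasDerivAt (fun s => γ * g s) (γ * deriv g s) s :=
        (hg.differentiable one_ne_zero s).hasDerivAt.const_mul γ
      convert! ((hasDerivAt_abs_rpow (γ * g s) hp).comp s hin).const_mul γ⁻¹ using 1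
      simp only [F', zero_mul, add_zero]
      field_simp
    have hsupp : HasCompactSupport (fun s => γ⁻¹ * |γ * g s| ^ p) := by
      have := (hFs 0).mul_left (f := fun _ => γ⁻¹)
      convert! this using 2 with s
      simp [F]
    refine integral_eq_zero_of_hasDerivAt_of_integrable hd key.1 ?_
    refine Continuous.integrable_of_hasCompactSupport ?_ hsupp
    exact continuous_iff_continuousAt.2 fun s => (hd s).continuousAt
  have hder := key.2
  rw [hzero, hasDerivAt_iff_tendsto_slope_zero] at hder
  have hinv : Tendsto (fun κ : ℝ => κ⁻¹) atTop (𝓝[≠] 0) :=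
    tendsto_inv_atTop_nhdsGT_zero.mono_right (nhdsWithin_mono _ fun x hx => ne_of_gt hx)
  refine (hder.comp hinv).congr' ?_
  filter_upwards [eventually_gt_atTop 0] with κ hκ
  have e := Measure.integral_comp_div (fun t => F κ⁻¹ t - F 0 t) κ
  rw [integral_sub (hFi _) (hFi _), abs_of_pos hκ] at e
  simp only [Function.comp_apply, inv_inv, zero_add]
  rw [← e]
  refine integral_congr_ae (ae_of_all _ fun s => ?_)
  simp only [F, zero_mul, add_zero]
  rw [div_eq_inv_mul (deriv g (s / κ)) κ]

end OneDimensional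

/-! ### The function `log G` and the ground-state substitution -/

section GreenFunction

variable {n : ℕ} {Ω : Set (EuclideanSpace ℝ (Fin n))}
  {A : EuclideanSpace ℝ (Fin n) → Matrix (Fin n) (Fin n) ℝ} {G : EuclideanSpace ℝ (Fin n) → ℝ}

/-- Since `G → ∞` at `0` and `G → 0` at infinity, the shells `a ≤ log G ≤ b` stay away from `0`
and from infinity. -/
lemma isCompact_shell (hG : ContinuousOn G (Ω \ {0}))
    (hGpos : ∀ x ∈ Ω \ {0}, 0 < G x) (hGsing : Tendsto G (𝓝[Ω \ {0}] 0) atTop)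
    (hGinf : TendstoZeroAtInfinityIn Ω (Ω \ {0}) G) (a b : ℝ) :
    IsCompact {x ∈ Ω \ {0} | Real.log (G x) ∈ Icc a b} := by
  obtain ⟨K, hKΩ, hK, hKG⟩ := hGinf (Real.exp a) (Real.exp_pos a)
  obtain ⟨O, hO, h0O, hOG⟩ := mem_nhdsWithin.1 (hGsing.eventually_gt_atTop (Real.exp b))
  have hK' : IsCompact (K \ O) := hK.diff hO
  have hK'U : K \ O ⊆ Ω \ {0} := fun x hx => ⟨hKΩ hx.1, fun h => hx.2 (by
    rw [mem_singleton_iff.1 h]; exact h0O)⟩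
  have hlog : ContinuousOn (fun x => Real.log (G x)) (K \ O) :=
    (hG.mono hK'U).log fun x hx => (hGpos x (hK'U hx)).ne'
  have hclosed := hlog.preimage_isClosed_of_isClosed hK'.isClosed (isClosed_Icc (a := a) (b := b))
  have : {x ∈ Ω \ {0} | Real.log (G x) ∈ Icc a b} =
      (K \ O) ∩ (fun x => Real.log (G x)) ⁻¹' Icc a b := by
    ext x
    refine ⟨fun hx => ⟨⟨?_, ?_⟩, hx.2⟩, fun hx => ⟨hK'U hx.1, hx.2⟩⟩
    · by_contra h
      have h1 := hKG x ⟨hx.1, h⟩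
      have h2 : Real.log (G x) < a := (Real.log_lt_iff_lt_exp (hGpos x hx.1)).2 h1
      exact absurd hx.2.1 (not_le.2 h2)
    · intro h
      have h1 : Real.exp b < G x := hOG ⟨h, hx.1⟩
      have h2 := (Real.lt_log_iff_exp_lt (hGpos x hx.1)).2 h1
      exact absurd hx.2.2 (not_le.2 h2)
  rw [this]
  exact hK'.of_isClosed_subset hclosed inter_subset_left

/-- The ground-state substitution `u = G^γ g((log G)/κ)`, `γ = (p-1)/p`: pointwise, the energy
density is a function of `log G` times `|∇G|_A^p / G`. -/
lemma energy_density {p : ℝ} (hp : 1 < p) {x : EuclideanSpace ℝ (Fin n)} (hG : 0 < G x)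
    (y z : ℝ) (ξ : EuclideanSpace ℝ (Fin n)) :
    aNorm A x ((Real.exp ((p - 1) / p * Real.log (G x)) * y) • (G x)⁻¹ • ξ) ^ p +
        -(((p - 1) / p) ^ p * (aNorm A x ξ / G x) ^ p) *
          |Real.exp ((p - 1) / p * Real.log (G x)) * z| ^ p =
      (|y| ^ p - |(p - 1) / p * z| ^ p) * (aNorm A x ξ ^ p / G x) := by
  have hp0 : 0 < p := by linarith
  have hγ : 0 ≤ (p - 1) / p := div_nonneg (by linarith) hp0.le
  have ha := aNorm_nonneg (A := A) x ξ
  set E := Real.exp ((p - 1) / p * Real.log (G x)) with hE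
  have hEpos : 0 < E := Real.exp_pos _
  have hEp : E ^ p = G x ^ p / G x := by
    rw [hE, ← Real.exp_mul, ← Real.rpow_sub_one hG.ne', Real.rpow_def_of_pos hG]
    congr 1
    field_simp
  have hGp : 0 < G x ^ p := Real.rpow_pos_of_pos hG p
  rw [aNorm_smul, aNorm_smul, abs_mul, abs_mul, abs_mul, abs_of_pos hEpos, abs_of_nonneg hγ,
    abs_of_pos (inv_pos.2 hG), Real.mul_rpow (by positivity) (by positivity),
    Real.mul_rpow hEpos.le (abs_nonneg y), Real.mul_rpow (inv_pos.2 hG).le ha,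
    Real.mul_rpow hEpos.le (abs_nonneg z), Real.mul_rpow hγ (abs_nonneg z),
    Real.div_rpow ha hG.le, Real.inv_rpow hG.le, hEp]
  field_simp
  ring

end GreenFunction

/-! ### The null-sequence -/

theorem criticality_pA_laplacian
    {n : ℕ} (hn : 2 ≤ n) (Ω : Set (EuclideanSpace ℝ (Fin n)))
    (hΩopen : IsOpen Ω) (hΩconn : IsConnected Ω)
    (p : ℝ) (hp : 1 < p)
    (A : EuclideanSpace ℝ (Fin n) → Matrix (Fin n) (Fin n) ℝ)
    (hA : IsEllipticMatrix Ω A)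
    (h0 : (0 : EuclideanSpace ℝ (Fin n)) ∈ Ω) (hpn : p ≤ n)
    (hsub : IsSubcritical A p (fun _ => (0:ℝ)) Ω)
    (G : EuclideanSpace ℝ (Fin n) → ℝ)
    (hG1 : ContDiffOn ℝ 1 G (Ω \ {0}))
    (hGpos : ∀ x ∈ Ω \ {0}, 0 < G x)
    (hGharm : IsPAHarmonic A p (Ω \ {0}) G)
    (hGsing : Tendsto G (𝓝[Ω \ {0}] 0) atTop)
    (hGinf : TendstoZeroAtInfinityIn Ω (Ω \ {0}) G) :
    ∃ u : ℕ → EuclideanSpace ℝ (Fin n) → ℝ,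
      IsNullSequence A p
        (fun x => -(((p - 1) / p) ^ p * (aNorm A x (gradient G x) / G x) ^ p))
        (Ω \ {0}) u := by
  have hp0 : 0 < p := by linarith
  set γ : ℝ := (p - 1) / p with hγdef
  have hγ : 0 < γ := div_pos (by linarith) hp0
  have hU : IsOpen (Ω \ {(0 : EuclideanSpace ℝ (Fin n))}) := hΩopen.sdiff isClosed_singleton
  set U := Ω \ {(0 : EuclideanSpace ℝ (Fin n))} with hUdef
  have hUΩ : U ⊆ Ω := sdiff_subset
  have hdG : ∀ x ∈ U, DifferentiableAt ℝ G x := fun x hx =>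
    (hG1.contDiffAt (hU.mem_nhds hx)).differentiableAt one_ne_zero
  have hgradG : ContinuousOn (gradient G) U :=
    (InnerProductSpace.toDual ℝ (EuclideanSpace ℝ (Fin n))).symm.continuous.comp_continuousOn
      (hG1.continuousOn_fderiv_of_isOpen hU le_rfl)
  let L : EuclideanSpace ℝ (Fin n) → ℝ := fun x => Real.log (G x)
  let M : EuclideanSpace ℝ (Fin n) → ℝ := fun x => aNorm A x (gradient G x) ^ p / G x
  have hL : ContDiffOn ℝ 1 L U := hG1.log fun x hx => (hGpos x hx).ne'
  have hgradL : ∀ x ∈ U, gradient L x = (G x)⁻¹ • gradient G x := fun x hx =>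
    gradient_eq_smul_of_hasDerivAt (Real.hasDerivAt_log (hGpos x hx).ne') (hdG x hx)
  have hcomp : ∀ a b, IsCompact {x ∈ U | L x ∈ Icc a b} :=
    isCompact_shell hG1.continuousOn hGpos hGsing hGinf
  have haG : ContinuousOn (fun x => aNorm A x (gradient G x)) U :=
    hA.continuousOn_aNorm hΩopen hUΩ hgradG
  have hM : ContinuousOn M U :=
    (haG.rpow_const fun _ _ => Or.inr hp0.le).div hG1.continuousOn fun x hx => (hGpos x hx).ne'
  have hV : ContinuousOn
      (fun x => -(γ ^ p * (aNorm A x (gradient G x) / G x) ^ p)) U :=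
    (continuousOn_const.mul ((haG.div hG1.continuousOn fun x hx => (hGpos x hx).ne').rpow_const
      fun _ _ => Or.inr hp0.le)).neg
  -- Testing the equation with `H (log G)`.
  have hzero : ∀ H : ℝ → ℝ, ContDiff ℝ 1 H → HasCompactSupport H →
      ∫ x in U, deriv H (L x) * M x = 0 := by
    intro H hH hHc
    obtain ⟨h1, h2, h3⟩ := contDiff_indicator_level hU hL hcomp hH hHc
    rw [← hGharm.integral_eq_zero_of_contDiff_one hA hΩopen hU hUΩ hp hgradG h1 h2 h3]
    refine setIntegral_congr_fun hU.measurableSet fun x hx => ?_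
    simp only [M]
    rw [gradient_indicator hU hL hH hx, hgradL x hx, aInner_smul_right, aInner_smul_right,
      ← hA.aNorm_rpow_mul_aInner (hUΩ hx) (gradient G x) hp]
    ring
  obtain ⟨c, hc⟩ := exists_const_integral_level hU hL.continuousOn hcomp hM hzero
  let φ : ContDiffBump (0 : ℝ) := ⟨1, 2, one_pos, one_lt_two⟩
  have hφ1 : ContDiff ℝ 1 (φ : ℝ → ℝ) := φ.contDiff
  have hφc : HasCompactSupport (φ : ℝ → ℝ) := φ.hasCompactSupport
  let f : ℝ → ℝ → ℝ := fun κ s => Real.exp (γ * s) * φ (s / κ)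
  have hf1 : ∀ κ, ContDiff ℝ 1 (f κ) := fun κ =>
    (Real.contDiff_exp.comp (contDiff_const.mul contDiff_id)).mul
      (hφ1.comp (contDiff_id.div_const κ))
  have hscale : ∀ κ > 0, ∀ {h : ℝ → ℝ}, HasCompactSupport h →
      HasCompactSupport fun s => h (s / κ) := by
    intro κ hκ h hh
    have := hh.comp_homeomorph (Homeomorph.mulRight₀ κ⁻¹ (inv_ne_zero hκ.ne'))
    simpa [Function.comp_def, div_eq_mul_inv] using this
  have hfc : ∀ κ > 0, HasCompactSupport (f κ) := fun κ hκ => (hscale κ hκ hφc).mul_left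
  have hfd : ∀ κ s, deriv (f κ) s =
      Real.exp (γ * s) * (γ * φ (s / κ) + deriv φ (s / κ) / κ) := by
    intro κ s
    have h1 : HasDerivAt (fun s => Real.exp (γ * s)) (Real.exp (γ * s) * γ) s := by
      simpa using ((hasDerivAt_id s).const_mul γ).exp
    have h2 : HasDerivAt (fun s => φ (s / κ)) (deriv φ (s / κ) * (1 / κ)) s :=
      HasDerivAt.comp (h₂ := (φ : ℝ → ℝ)) (h := fun s => s / κ) s
        (hφ1.differentiable one_ne_zero (s / κ)).hasDerivAt ((hasDerivAt_id s).div_const κ)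
    have h3 : HasDerivAt (f κ) _ s := h1.mul h2
    rw [h3.deriv]
    ring
  -- `w κ = G ^ γ * φ ((log G) / κ)` is the `C¹` form of the null-sequence; `Q` is the energy.
  let w : ℝ → EuclideanSpace ℝ (Fin n) → ℝ := fun κ => U.indicator fun y => f κ (L y)
  let Q : (EuclideanSpace ℝ (Fin n) → ℝ) → ℝ := fun u => ∫ x in U,
    (aNorm A x (gradient u x) ^ p +
      -(γ ^ p * (aNorm A x (gradient G x) / G x) ^ p) * |u x| ^ p)
  have hφ'c : Continuous (deriv (φ : ℝ → ℝ)) := hφ1.continuous_deriv le_rfl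
  have hQ : ∀ κ > 0, Q (w κ) = c * ∫ s,
      (|γ * φ (s / κ) + deriv φ (s / κ) / κ| ^ p - |γ * φ (s / κ)| ^ p) := by
    intro κ hκ
    rw [← hc]
    · refine setIntegral_congr_fun hU.measurableSet fun x hx => ?_
      simp only [w, M]
      rw [gradient_indicator hU hL (hf1 κ) hx, hgradL x hx, indicator_of_mem hx, hfd]
      exact energy_density hp (hGpos x hx) _ _ _
    · have h1 : Continuous fun s => φ (s / κ) := hφ1.continuous.comp (continuous_id.div_const κ)
      have h2 : Continuous fun s => deriv φ (s / κ) := hφ'c.comp (continuous_id.div_const κ)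
      exact (((continuous_const.mul h1).add (h2.div_const κ)).abs.rpow_const
        fun _ => Or.inr hp0.le).sub ((continuous_const.mul h1).abs.rpow_const
        fun _ => Or.inr hp0.le)
    · have h1 : HasCompactSupport fun t =>
          |γ * φ t + deriv φ t / κ| ^ p - |γ * φ t| ^ p := by
        refine HasCompactSupport.intro hφc.isCompact fun s hs => ?_
        have e1 : φ s = 0 := image_eq_zero_of_notMem_tsupport hs
        have e2 : deriv φ s = 0 := by
          by_contra h; exact hs (support_deriv_subset h)
        simp [e1, e2]
      exact hscale κ hκ h1
  -- A ball with closure in `U`, on which `w κ` eventually equals `G ^ γ`.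
  have : Nontrivial (EuclideanSpace ℝ (Fin n)) := by
    have : Nonempty (Fin n) := ⟨⟨0, by omega⟩⟩
    infer_instance
  obtain ⟨x₀, hx₀⟩ : U.Nonempty := by
    have h1 : Ω ∈ 𝓝[≠] (0 : EuclideanSpace ℝ (Fin n)) :=
      mem_nhdsWithin_of_mem_nhds (hΩopen.mem_nhds h0)
    have := Module.punctured_nhds_neBot ℝ (EuclideanSpace ℝ (Fin n)) 0
    exact nonempty_of_mem (inter_mem h1 self_mem_nhdsWithin)
  obtain ⟨r, hr, hrU⟩ := Metric.nhds_basis_closedBall.mem_iff.1 (hU.mem_nhds hx₀)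
  obtain ⟨N₀, hN₀⟩ := (isCompact_closedBall x₀ r).exists_bound_of_continuousOn
    (hL.continuousOn.mono hrU)
  set N := max N₀ 1 with hN
  have hN1 : 1 ≤ N := le_max_right _ _
  have hLN : ∀ x ∈ Metric.closedBall x₀ r, |L x| ≤ N := fun x hx =>
    (hN₀ x hx).trans (le_max_left _ _)
  let m : ℝ := Real.exp (-(γ * N)) / 2
  have hm : 0 < m := by positivity
  let κ : ℕ → ℝ := fun j => j + N
  have hκN : ∀ j, N ≤ κ j := fun j => le_add_of_nonneg_left (Nat.cast_nonneg j)
  have hκ0 : ∀ j, 0 < κ j := fun j => by linarith [hκN j]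
  have hκ : Tendsto κ atTop atTop := tendsto_atTop_add_const_right _ _ tendsto_natCast_atTop_atTop
  have hw0 : ∀ κ x, 0 ≤ w κ x := fun κ x =>
    indicator_nonneg (fun y _ => mul_nonneg (Real.exp_pos _).le φ.nonneg) x
  have hwB : ∀ j, ∀ x ∈ Metric.closedBall x₀ r,
      2 * m ≤ w (κ j) x ∧ w (κ j) x ≤ Real.exp (γ * N) := by
    intro j x hx
    have hLx := abs_le.1 (hLN x hx)
    have h1 : φ (L x / κ j) = 1 := by
      refine φ.one_of_mem_closedBall ?_
      rw [mem_closedBall_zero_iff, Real.norm_eq_abs, abs_div, abs_of_pos (hκ0 j),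
        div_le_one (hκ0 j)]
      exact (hLN x hx).trans (hκN j)
    have h2 : w (κ j) x = Real.exp (γ * L x) := by
      simp only [w, f]
      rw [indicator_of_mem (hrU hx), h1, mul_one]
    rw [h2]
    constructor
    · have : 2 * m = Real.exp (-(γ * N)) := by simp only [m]; ring
      rw [this, Real.exp_le_exp]
      nlinarith [hLx.1]
    · rw [Real.exp_le_exp]
      nlinarith [hLx.2]
  -- Smooth replacements: close enough to `w (κ j)` uniformly to keep the bounds on the ball, and
  -- in energy to keep the limit.
  have hex : ∀ j : ℕ, ∃ u, IsTestFun U u ∧ (∀ x, 0 ≤ u x) ∧ (∀ x, |u x - w (κ j) x| ≤ m) ∧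
      |Q u - Q (w (κ j))| ≤ 1 / ((j : ℝ) + 1) := by
    intro j
    obtain ⟨h1, h2, h3⟩ := contDiff_indicator_level hU hL hcomp (hf1 (κ j)) (hfc _ (hκ0 j))
    obtain ⟨v, hv, hv0, hvw, hvQ⟩ := exists_approx hU h1 h2 h3
    have hlim := hvQ _ (hA.isAdmissible_energy hΩopen hU hUΩ hp hV)
    have e1 : ∀ᶠ i in atTop, |Q (v i) - Q (w (κ j))| < 1 / ((j : ℝ) + 1) :=
      Metric.tendsto_nhds.1 hlim _ Nat.one_div_pos_of_nat
    have e2 : ∀ᶠ i : ℕ in atTop, 1 / ((i : ℝ) + 1) < m :=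
      tendsto_one_div_add_atTop_nhds_zero_nat.eventually_lt_const hm
    obtain ⟨i, hi1, hi2⟩ := (e1.and e2).exists
    exact ⟨v i, hv i, hv0 (hw0 _) i, fun x => (hvw i x).trans hi2.le, hi1.le⟩
  choose u hu hu0 huw huQ using hex
  refine ⟨u, hu, hu0, ⟨Metric.ball x₀ r, Metric.isOpen_ball, ⟨x₀, Metric.mem_ball_self hr⟩,
    ?_, ?_, ?_⟩, ?_⟩
  · rw [closure_ball x₀ hr.ne']
    exact isCompact_closedBall x₀ r
  · rw [closure_ball x₀ hr.ne']
    exact hrU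
  · set D := Real.exp (γ * N) + m
    have hD : 0 < D := by positivity
    have hfin : volume (Metric.ball x₀ r) ≠ ⊤ := measure_ball_lt_top.ne
    set β := volume.real (Metric.ball x₀ r)
    have hβ : 0 < β := ENNReal.toReal_pos (Metric.measure_ball_pos volume x₀ hr).ne' hfin
    have hmp : 0 < m ^ p := Real.rpow_pos_of_pos hm p
    have hDp : 0 < D ^ p := Real.rpow_pos_of_pos hD p
    refine ⟨min (m ^ p * β) (D ^ p * β)⁻¹, by positivity, fun j => ?_⟩
    have hint : IntegrableOn (fun x => u j x ^ p) (Metric.ball x₀ r) :=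
      (((hu j).1.continuous.rpow_const fun _ => Or.inr hp0.le).continuousOn.integrableOn_compact
        (isCompact_closedBall x₀ r)).mono_set Metric.ball_subset_closedBall
    have hconst : ∀ a : ℝ, ∫ _ in Metric.ball x₀ r, a = a * β := fun a => by
      rw [setIntegral_const, smul_eq_mul, mul_comm]
    have hb : ∀ x ∈ Metric.ball x₀ r, m ≤ u j x ∧ u j x ≤ D := fun x hx => by
      have h1 := hwB j x (Metric.ball_subset_closedBall hx)
      have h2 := abs_le.1 (huw j x)
      exact ⟨by linarith [h1.1, h2.1], by simp only [D]; linarith [h1.2, h2.2]⟩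
    constructor
    · refine (min_le_left _ _).trans ?_
      rw [← hconst]
      exact setIntegral_mono_on (integrableOn_const hfin) hint measurableSet_ball
        fun x hx => Real.rpow_le_rpow hm.le (hb x hx).1 hp0.le
    · have h1 : ∫ x in Metric.ball x₀ r, u j x ^ p ≤ D ^ p * β := by
        rw [← hconst]
        exact setIntegral_mono_on hint (integrableOn_const hfin) measurableSet_ball
          fun x hx => Real.rpow_le_rpow (hu0 j x) (hb x hx).2 hp0.le
      refine h1.trans ?_
      rw [le_inv_comm₀ (by positivity) (by positivity)]
      exact min_le_right _ _
  · have hQw : Tendsto (fun j => Q (w (κ j))) atTop (𝓝 0) := by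
      have h1 := ((tendsto_hardy_defect hp hγ hφ1 hφc).comp hκ).const_mul c
      rw [mul_zero] at h1
      exact h1.congr fun j => (hQ _ (hκ0 j)).symm
    have hdiff : Tendsto (fun j => Q (u j) - Q (w (κ j))) atTop (𝓝 0) :=
      squeeze_zero_norm huQ tendsto_one_div_add_atTop_nhds_zero_nat
    have := hdiff.add hQw
    simp only [sub_add_cancel, add_zero] at this
    exact this
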